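/- For any two states ω¹, ω² of a finite-dimensional bipartite system AB with ε = ½‖ω¹−ω²‖₁ < 1, the quantum mutual information satisfies |I(A:B)_{ω¹} − I(A:B)_{ω²}| ≤ 2ε log(dim H_A) + 3(1+ε)·h₂(ε/(1+ε)). -/

import Mathlib

open Matrix
open scoped ComplexOrder

noncomputable section

/-- The von Neumann entropy, extended to the cone of positive trace-class operators by
`H(ρ) = Tr η(ρ) − η(Tr ρ)` with `η(x) = −x log x` (computed spectrally). -/
def vnEnt {n : Type*} [Fintype n] [DecidableEq n] (ρ : Matrix n n ℂ) : ℝ :=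
  if h : ρ.IsHermitian then
    (∑ i, Real.negMulLog (h.eigenvalues i)) - Real.negMulLog (∑ i, h.eigenvalues i)
  else 0

/-- A state (density operator): positive semidefinite with unit trace. -/
def IsState {n : Type*} [Fintype n] (ρ : Matrix n n ℂ) : Prop :=
  ρ.PosSemidef ∧ ρ.trace = 1

/-- Partial trace over the second tensor factor. -/
def mFst {a b : Type*} [Fintype b] (ω : Matrix (a × b) (a × b) ℂ) : Matrix a a ℂ :=
  Matrix.of fun i j => ∑ k : b, ω (i, k) (j, k)

/-- Partial trace over the first tensor factor. -/
def mSnd {a b : Type*} [Fintype a] (ω : Matrix (a × b) (a × b) ℂ) : Matrix b b ℂ :=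
  Matrix.of fun i j => ∑ k : a, ω (k, i) (k, j)

/-- The trace norm of a matrix: the sum of its singular values. -/
def traceNorm {n : Type*} [Fintype n] [DecidableEq n] (M : Matrix n n ℂ) : ℝ :=
  ∑ i, Real.sqrt ((Matrix.posSemidef_conjTranspose_mul_self M).1.eigenvalues i)

/-- Quantum mutual information `I(A:B)_ω = H(ω_A) + H(ω_B) − H(ω_AB)`. -/
def mutInf {a b : Type*} [Fintype a] [DecidableEq a] [Fintype b] [DecidableEq b]
    (ω : Matrix (a × b) (a × b) ℂ) : ℝ :=
  vnEnt (mFst ω) + vnEnt (mSnd ω) - vnEnt ω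

/-- The sum of `f` over the (real parts of the) eigenvalues of `M`, with multiplicity. -/
def specSum {n : Type*} [Fintype n] [DecidableEq n] (f : ℝ → ℝ) (M : Matrix n n ℂ) : ℝ :=
  (M.charpoly.roots.map fun z => f z.re).sum

section Classical

open Real

lemma negMulLog_le_of_pos {p a b t : ℝ} (hp : 0 ≤ p) (ha : p ≤ a) (hb : p ≤ b) (ht : p ≤ t) :
    negMulLog p ≤ -(p * log a) - p * log b + p * log t + (a * b / t - p) := by
  rcases hp.eq_or_lt with rfl | hp
  · have : 0 ≤ a * b / t := by positivity
    simpa using this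
  · have ha' := hp.trans_le ha
    have hb' := hp.trans_le hb
    have ht' := hp.trans_le ht
    have h := log_le_sub_one_of_pos (x := a * b / t / p) (by positivity)
    rw [log_div (by positivity) hp.ne', log_div (by positivity) ht'.ne',
      log_mul ha'.ne' hb'.ne'] at h
    have h2 := mul_le_mul_of_nonneg_left h hp.le
    have h3 : p * (a * b / t / p - 1) = a * b / t - p := by field_simp
    rw [h3] at h2
    rw [negMulLog]
    linarith

/-- Subadditivity of the Shannon entropy, in unnormalized form. -/
lemma sum_negMulLog_le_marginals {ι κ : Type*} [Fintype ι] [Fintype κ] (p : ι → κ → ℝ)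
    (hp : ∀ i k, 0 ≤ p i k) :
    ∑ i, ∑ k, negMulLog (p i k) ≤ ∑ i, negMulLog (∑ k, p i k) + ∑ k, negMulLog (∑ i, p i k)
      - negMulLog (∑ i, ∑ k, p i k) := by
  set A : ι → ℝ := fun i => ∑ k, p i k with hA
  set B : κ → ℝ := fun k => ∑ i, p i k with hB
  set t : ℝ := ∑ i, A i with ht
  have hBt : ∑ k, B k = t := Finset.sum_comm
  have h1 : ∀ i k, p i k ≤ A i := fun i k =>
    Finset.single_le_sum (f := fun k => p i k) (fun k _ => hp i k) (Finset.mem_univ k)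
  have h2 : ∀ i k, p i k ≤ B k := fun i k =>
    Finset.single_le_sum (f := fun i => p i k) (fun i _ => hp i k) (Finset.mem_univ i)
  have h3 : ∀ i k, p i k ≤ t := fun i k => (h1 i k).trans <|
    Finset.single_le_sum (f := A) (fun i _ => Finset.sum_nonneg fun k _ => hp i k)
      (Finset.mem_univ i)
  have key : ∑ i, ∑ k, negMulLog (p i k) ≤ ∑ i, ∑ k,
      (-(p i k * log (A i)) - p i k * log (B k) + p i k * log t + (A i * B k / t - p i k)) :=
    Finset.sum_le_sum fun i _ => Finset.sum_le_sum fun k _ =>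
      negMulLog_le_of_pos (hp i k) (h1 i k) (h2 i k) (h3 i k)
  refine key.trans (le_of_eq ?_)
  simp only [Finset.sum_add_distrib, Finset.sum_sub_distrib, Finset.sum_neg_distrib]
  have e1 : ∑ i, ∑ k, p i k * log (A i) = ∑ i, A i * log (A i) := by
    simp only [hA, Finset.sum_mul]
  have e2 : ∑ i, ∑ k, p i k * log (B k) = ∑ k, B k * log (B k) := by
    rw [Finset.sum_comm]; simp only [hB, Finset.sum_mul]
  have e3 : ∑ i, ∑ k, p i k * log t = t * log t := by
    simp only [ht, hA, Finset.sum_mul]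
  have e4 : ∑ i, ∑ k, A i * B k / t = t := by
    simp only [← Finset.sum_div, ← Finset.mul_sum, hBt, ← Finset.sum_mul, ← ht]
    exact mul_self_div_self t
  rw [e1, e2, e3, e4]
  simp only [negMulLog, neg_mul, Finset.sum_neg_distrib]
  linarith

lemma sum_negMulLog_le_card {ι : Type*} [Fintype ι] (q : ι → ℝ) (hq : ∀ i, 0 ≤ q i) :
    ∑ i, negMulLog (q i) ≤ negMulLog (∑ i, q i) + (∑ i, q i) * log (Fintype.card ι) := by
  rcases isEmpty_or_nonempty ι with h | h
  · simp
  have hd : (0 : ℝ) < Fintype.card ι := by exact_mod_cast Fintype.card_pos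
  have hd1 : (1 : ℝ) ≤ Fintype.card ι := by exact_mod_cast Fintype.card_pos
  set t := ∑ i, q i with ht
  have h1 : ∀ i, q i ≤ t := fun i => Finset.single_le_sum (fun i _ => hq i) (Finset.mem_univ i)
  have key : ∑ i, negMulLog (q i) ≤
      ∑ i, (-(q i * log t) - q i * log 1 + q i * log (Fintype.card ι)
        + (t / Fintype.card ι - q i)) := by
    refine Finset.sum_le_sum fun i _ => ?_
    rcases (hq i).eq_or_lt with h0 | h0
    · rw [← h0]
      have : 0 ≤ t := h0.trans_le (h1 i)
      have : 0 ≤ t / Fintype.card ι := by positivity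
      simpa using this
    · have ht0 := h0.trans_le (h1 i)
      have h := log_le_sub_one_of_pos (x := t / Fintype.card ι / q i) (by positivity)
      rw [log_div (by positivity) h0.ne', log_div ht0.ne' hd.ne'] at h
      have h2 := mul_le_mul_of_nonneg_left h h0.le
      have h3 : q i * (t / Fintype.card ι / q i - 1) = t / Fintype.card ι - q i := by field_simp
      rw [h3] at h2
      rw [negMulLog, log_one]
      linarith
  refine key.trans (le_of_eq ?_)
  simp only [Finset.sum_add_distrib, Finset.sum_sub_distrib, Finset.sum_neg_distrib,
    ← Finset.sum_mul, ← ht, Finset.sum_const, Finset.card_univ, nsmul_eq_mul, log_one, negMulLog]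
  field_simp
  ring

lemma negMulLog_one_add_eq {x : ℝ} (hx : 0 ≤ x) :
    negMulLog 1 + negMulLog x - negMulLog (1 + x) = (1 + x) * binEntropy (x / (1 + x)) := by
  rcases hx.eq_or_lt with rfl | hx
  · simp
  have h1 : 1 - x / (1 + x) = 1 / (1 + x) := by field_simp; ring
  rw [binEntropy, h1, inv_div, inv_div, log_div (by positivity) hx.ne', div_one]
  simp only [negMulLog, log_one]
  field_simp
  ring

end Classical

section Spectral

variable {m n : Type*} [Fintype m] [DecidableEq m] [Fintype n] [DecidableEq n]

lemma specSum_eq_sum_eigenvalues (f : ℝ → ℝ) {M : Matrix n n ℂ} (h : M.IsHermitian) :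
    specSum f M = ∑ i, f (h.eigenvalues i) := by
  rw [specSum, h.roots_charpoly_eq_eigenvalues, Multiset.map_map]
  rfl

lemma specSum_diagonal (f : ℝ → ℝ) (d : n → ℝ) :
    specSum f (diagonal fun i => (d i : ℂ)) = ∑ i, f (d i) := by
  rw [specSum, charpoly_diagonal, Polynomial.roots_prod]
  · simp
  · simp [Finset.prod_ne_zero_iff, Polynomial.X_sub_C_ne_zero]

/-- `A * B` and `B * A` have the same nonzero spectrum. -/
lemma specSum_mul_comm {f : ℝ → ℝ} (hf : f 0 = 0) (A : Matrix m n ℂ) (B : Matrix n m ℂ) :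
    specSum f (A * B) = specSum f (B * A) := by
  have h := congrArg Polynomial.roots (charpoly_mul_comm' A B)
  rw [Polynomial.roots_mul
      (mul_ne_zero (pow_ne_zero _ Polynomial.X_ne_zero) (charpoly_monic _).ne_zero),
    Polynomial.roots_mul
      (mul_ne_zero (pow_ne_zero _ Polynomial.X_ne_zero) (charpoly_monic _).ne_zero),
    Polynomial.roots_X_pow, Polynomial.roots_X_pow] at h
  have h2 := congrArg (fun s => (s.map fun z : ℂ => f z.re).sum) h
  simpa [specSum, Multiset.map_nsmul, Multiset.sum_nsmul, hf] using h2

lemma specSum_unitary_conj {f : ℝ → ℝ} (hf : f 0 = 0) {V : Matrix n n ℂ} (hV : V * Vᴴ = 1)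
    (M : Matrix n n ℂ) : specSum f (Vᴴ * M * V) = specSum f M := by
  rw [specSum_mul_comm hf, ← Matrix.mul_assoc, hV, Matrix.one_mul]

lemma Matrix.IsHermitian.exists_unitary_diagonal {M : Matrix n n ℂ} (h : M.IsHermitian) :
    ∃ U : Matrix n n ℂ, U * Uᴴ = 1 ∧ Uᴴ * U = 1 ∧
      M = U * diagonal (fun i => (h.eigenvalues i : ℂ)) * Uᴴ := by
  refine ⟨h.eigenvectorUnitary, ?_, ?_, ?_⟩
  · exact (Matrix.mem_unitaryGroup_iff).1 h.eigenvectorUnitary.2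
  · exact (Matrix.mem_unitaryGroup_iff').1 h.eigenvectorUnitary.2
  · conv_lhs => rw [h.spectral_theorem, Unitary.conjStarAlgAut_apply]
    rfl

lemma conj_eq_diagonal {U M D : Matrix n n ℂ} (hU : Uᴴ * U = 1) (hM : M = U * D * Uᴴ) :
    Uᴴ * M * U = D := by
  rw [hM]
  calc Uᴴ * (U * D * Uᴴ) * U = (Uᴴ * U) * D * (Uᴴ * U) := by simp only [Matrix.mul_assoc]
    _ = D := by rw [hU, Matrix.one_mul, Matrix.mul_one]

lemma posSemidef_diag_re_nonneg {ι : Type*} {M : Matrix ι ι ℂ} (hM : M.PosSemidef) (i : ι) :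
    0 ≤ (M i i).re :=
  (Complex.le_def.1 (hM.diag_nonneg (i := i))).1

lemma sum_normSq_row {U : Matrix n n ℂ} (hU : U * Uᴴ = 1) (i : n) :
    ∑ j, Complex.normSq (U i j) = 1 := by
  have h := congrFun (congrFun hU i) i
  simp only [mul_apply, conjTranspose_apply, one_apply_eq, Complex.star_def,
    Complex.mul_conj] at h
  exact_mod_cast h

/-- The entropy of a positive matrix is at most that of its diagonal. -/
lemma specSum_negMulLog_le_diag {M : Matrix n n ℂ} (hM : M.PosSemidef) :
    specSum Real.negMulLog M ≤ ∑ i, Real.negMulLog (M i i).re := by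
  obtain ⟨U, h1, h2, h3⟩ := hM.1.exists_unitary_diagonal
  set l := hM.1.eigenvalues with hl
  have hl0 : ∀ i, 0 ≤ l i := hM.eigenvalues_nonneg
  have hdiag : ∀ i, (M i i).re = ∑ j, Complex.normSq (U i j) * l j := by
    intro i
    conv_lhs => rw [h3]
    rw [mul_apply, Complex.re_sum]
    refine Finset.sum_congr rfl fun j _ => ?_
    rw [mul_diagonal, conjTranspose_apply, Complex.star_def, mul_right_comm, Complex.mul_conj,
      ← Complex.ofReal_mul, Complex.ofReal_re]
  have hrow := sum_normSq_row h1
  have hcol : ∀ j, ∑ i, Complex.normSq (U i j) = 1 := by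
    intro j
    have h := sum_normSq_row (U := Uᴴ) (by rwa [conjTranspose_conjTranspose]) j
    simpa [conjTranspose_apply] using h
  rw [specSum_eq_sum_eigenvalues _ hM.1]
  calc ∑ j, Real.negMulLog (l j)
      = ∑ i, ∑ j, Complex.normSq (U i j) * Real.negMulLog (l j) := by
        rw [Finset.sum_comm]
        simp only [← Finset.sum_mul, hcol, one_mul]
    _ ≤ ∑ i, Real.negMulLog (M i i).re := by
        refine Finset.sum_le_sum fun i _ => ?_
        rw [hdiag]
        have := Real.concaveOn_negMulLog.le_map_sum (t := Finset.univ)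
          (w := fun j => Complex.normSq (U i j)) (p := l)
          (fun j _ => Complex.normSq_nonneg _) (hrow i) (fun j _ => hl0 j)
        simpa using this

lemma specSum_negMulLog_le_diag_conj {M V : Matrix n n ℂ} (hM : M.PosSemidef)
    (hV : V * Vᴴ = 1) :
    specSum Real.negMulLog M ≤ ∑ i, Real.negMulLog ((Vᴴ * M * V) i i).re := by
  rw [← specSum_unitary_conj Real.negMulLog_zero hV M]
  exact specSum_negMulLog_le_diag (hM.conjTranspose_mul_mul_same V)

lemma exists_factor_diagonal {M : Matrix n n ℂ} (hM : M.PosSemidef) :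
    ∃ Y : Matrix n n ℂ, M = Y * Yᴴ ∧
      Yᴴ * Y = diagonal fun i => (hM.1.eigenvalues i : ℂ) := by
  obtain ⟨U, h1, h2, h3⟩ := hM.1.exists_unitary_diagonal
  set l := hM.1.eigenvalues with hl
  have hl0 : ∀ i, 0 ≤ l i := hM.eigenvalues_nonneg
  set D : Matrix n n ℂ := diagonal fun i => (Real.sqrt (l i) : ℂ) with hD
  have hDD : D * D = diagonal fun i => (l i : ℂ) := by
    rw [hD, diagonal_mul_diagonal]
    congr 1
    funext i
    rw [← Complex.ofReal_mul, Real.mul_self_sqrt (hl0 i)]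
  have hDH : Dᴴ = D := by
    rw [hD, diagonal_conjTranspose]
    congr 1
    funext i
    simp
  refine ⟨U * D, ?_, ?_⟩
  · rw [conjTranspose_mul, hDH, h3, ← hDD]
    simp only [Matrix.mul_assoc]
  · rw [conjTranspose_mul, hDH, ← hDD]
    calc D * Uᴴ * (U * D) = D * (Uᴴ * U) * D := by simp only [Matrix.mul_assoc]
      _ = D * D := by rw [h2, Matrix.mul_one]

lemma specSum_mul_conjTranspose_le (X : Matrix m n ℂ) :
    specSum Real.negMulLog (X * Xᴴ) ≤ ∑ k, Real.negMulLog ((Xᴴ * X) k k).re := by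
  rw [specSum_mul_comm Real.negMulLog_zero]
  exact specSum_negMulLog_le_diag (posSemidef_conjTranspose_mul_self X)

lemma specSum_negMulLog_add_le {ρ σ : Matrix n n ℂ} (hρ : ρ.PosSemidef) (hσ : σ.PosSemidef) :
    specSum Real.negMulLog (ρ + σ) ≤ specSum Real.negMulLog ρ + specSum Real.negMulLog σ := by
  obtain ⟨Y, hY, hY'⟩ := exists_factor_diagonal hρ
  obtain ⟨Z, hZ, hZ'⟩ := exists_factor_diagonal hσ
  have h : ρ + σ = fromCols Y Z * (fromCols Y Z)ᴴ := by
    rw [conjTranspose_fromCols_eq_fromRows_conjTranspose, fromCols_mul_fromRows, ← hY, ← hZ]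
  rw [h, specSum_eq_sum_eigenvalues _ hρ.1, specSum_eq_sum_eigenvalues _ hσ.1]
  refine (specSum_mul_conjTranspose_le _).trans (le_of_eq ?_)
  rw [conjTranspose_fromCols_eq_fromRows_conjTranspose, fromRows_mul_fromCols, hY', hZ',
    Fintype.sum_sum_type]
  simp

lemma specSum_negMulLog_add_ge {ρ σ : Matrix n n ℂ} (hρ : ρ.PosSemidef) (hσ : σ.PosSemidef) :
    specSum Real.negMulLog ρ + specSum Real.negMulLog σ ≤
      specSum Real.negMulLog (ρ + σ) + (Real.negMulLog ρ.trace.re + Real.negMulLog σ.trace.re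
        - Real.negMulLog (ρ.trace.re + σ.trace.re)) := by
  have hΩ := hρ.add hσ
  obtain ⟨V, h1, h2, h3⟩ := hΩ.1.exists_unitary_diagonal
  have hd := conj_eq_diagonal h2 h3
  have htr : ∀ M : Matrix n n ℂ, ∑ i, ((Vᴴ * M * V) i i).re = M.trace.re := by
    intro M
    have : (Vᴴ * M * V).trace = M.trace := by
      rw [Matrix.trace_mul_comm, ← Matrix.mul_assoc, h1, Matrix.one_mul]
    rw [← this, Matrix.trace, Complex.re_sum]
    rfl
  have hsum : ∀ i, ((Vᴴ * ρ * V) i i).re + ((Vᴴ * σ * V) i i).re = hΩ.1.eigenvalues i := by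
    intro i
    have := congrArg Complex.re (congrFun (congrFun hd i) i)
    rwa [Matrix.mul_add, Matrix.add_mul, Matrix.add_apply, Complex.add_re, diagonal_apply_eq,
      Complex.ofReal_re] at this
  have hlam : ∑ i, hΩ.1.eigenvalues i = ρ.trace.re + σ.trace.re := by
    simp only [← hsum, Finset.sum_add_distrib, htr]
  have key := sum_negMulLog_le_marginals
    (fun (i : n) (k : Bool) => bif k then ((Vᴴ * ρ * V) i i).re else ((Vᴴ * σ * V) i i).re)
    (by
      rintro i (_ | _)
      · exact posSemidef_diag_re_nonneg (hσ.conjTranspose_mul_mul_same V) i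
      · exact posSemidef_diag_re_nonneg (hρ.conjTranspose_mul_mul_same V) i)
  simp only [Fintype.sum_bool, cond_true, cond_false, hsum] at key
  simp only [Finset.sum_add_distrib, htr, hlam] at key
  rw [specSum_eq_sum_eigenvalues _ hΩ.1]
  have e1 := specSum_negMulLog_le_diag_conj hρ h1
  have e2 := specSum_negMulLog_le_diag_conj hσ h1
  linarith

lemma vnEnt_eq_specSum {M : Matrix n n ℂ} (h : M.IsHermitian) :
    vnEnt M = specSum Real.negMulLog M - Real.negMulLog M.trace.re := by
  rw [vnEnt, dif_pos h, specSum_eq_sum_eigenvalues _ h, h.trace_eq_sum_eigenvalues,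
    Complex.re_sum]
  simp

lemma traceNorm_eq_sum_abs {M : Matrix n n ℂ} (h : M.IsHermitian) :
    traceNorm M = ∑ i, |h.eigenvalues i| := by
  obtain ⟨U, h1, h2, h3⟩ := h.exists_unitary_diagonal
  rw [traceNorm, ← specSum_eq_sum_eigenvalues Real.sqrt,
    ← specSum_unitary_conj Real.sqrt_zero h1]
  have hd := conj_eq_diagonal h2 h3
  have : Uᴴ * (Mᴴ * M) * U = (Uᴴ * M * U) * (Uᴴ * M * U) := by
    rw [h.eq]
    calc Uᴴ * (M * M) * U = Uᴴ * M * 1 * M * U := by simp only [Matrix.mul_assoc, Matrix.one_mul]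
      _ = _ := by rw [← h1]; simp only [Matrix.mul_assoc]
  rw [this, hd, diagonal_mul_diagonal]
  simp only [← Complex.ofReal_mul]
  rw [specSum_diagonal]
  simp only [Real.sqrt_mul_self_eq_abs]

/-- Jordan decomposition of a traceless Hermitian matrix. -/
lemma exists_jordan_decomposition {M : Matrix n n ℂ} (h : M.IsHermitian) (ht : M.trace = 0) :
    ∃ P N : Matrix n n ℂ, P.PosSemidef ∧ N.PosSemidef ∧ M = P - N ∧
      P.trace.re = traceNorm M / 2 ∧ N.trace.re = traceNorm M / 2 := by
  obtain ⟨U, h1, h2, h3⟩ := h.exists_unitary_diagonal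
  set l := h.eigenvalues with hl
  have hpsd : ∀ d : n → ℝ, (∀ i, 0 ≤ d i) →
      (U * diagonal (fun i => (d i : ℂ)) * Uᴴ).PosSemidef := fun d hd =>
    (PosSemidef.diagonal fun i => by
      simpa using hd i).mul_mul_conjTranspose_same U
  have htr : ∀ d : n → ℝ, (U * diagonal (fun i => (d i : ℂ)) * Uᴴ).trace.re = ∑ i, d i := by
    intro d
    rw [Matrix.trace_mul_comm, ← Matrix.mul_assoc, h2, Matrix.one_mul, trace_diagonal,
      Complex.re_sum]
    simp
  have h0 : ∑ i, l i = 0 := by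
    rw [← htr, ← h3, ht, Complex.zero_re]
  refine ⟨U * diagonal (fun i => ((max (l i) 0 : ℝ) : ℂ)) * Uᴴ,
    U * diagonal (fun i => ((max (-l i) 0 : ℝ) : ℂ)) * Uᴴ,
    hpsd _ fun i => le_max_right _ _, hpsd _ fun i => le_max_right _ _, ?_, ?_, ?_⟩
  · conv_lhs => rw [h3]
    rw [← Matrix.sub_mul, ← Matrix.mul_sub, diagonal_sub]
    congr 3
    funext i
    rw [← Complex.ofReal_sub, max_zero_sub_max_neg_zero_eq_self]
  · have e : ∀ i, max (l i) 0 = (|l i| + l i) / 2 := fun i => by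
      rcases le_total 0 (l i) with hi | hi
      · rw [max_eq_left hi, abs_of_nonneg hi]; ring
      · rw [max_eq_right hi, abs_of_nonpos hi]; ring
    rw [htr, traceNorm_eq_sum_abs h, ← hl]
    simp only [e, ← Finset.sum_div, Finset.sum_add_distrib, h0, add_zero]
  · have e : ∀ i, max (-l i) 0 = (|l i| - l i) / 2 := fun i => by
      rcases le_total 0 (l i) with hi | hi
      · rw [max_eq_right (by linarith), abs_of_nonneg hi]; ring
      · rw [max_eq_left (by linarith), abs_of_nonpos hi]; ring
    rw [htr, traceNorm_eq_sum_abs h, ← hl]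
    simp only [e, ← Finset.sum_div, Finset.sum_sub_distrib, h0, sub_zero]

end Spectral

section Bipartite

lemma mFst_add {a b : Type*} [Fintype b]
    (ρ σ : Matrix (a × b) (a × b) ℂ) : mFst (ρ + σ) = mFst ρ + mFst σ := by
  ext i j
  simp [mFst, Finset.sum_add_distrib]

lemma mSnd_add {a b : Type*} [Fintype a]
    (ρ σ : Matrix (a × b) (a × b) ℂ) : mSnd (ρ + σ) = mSnd ρ + mSnd σ := by
  ext i j
  simp [mSnd, Finset.sum_add_distrib]

lemma trace_mFst {a b : Type*} [Fintype a] [Fintype b]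
    (ω : Matrix (a × b) (a × b) ℂ) : (mFst ω).trace = ω.trace := by
  simp [mFst, Matrix.trace, Fintype.sum_prod_type]

lemma trace_mSnd {a b : Type*} [Fintype a] [Fintype b]
    (ω : Matrix (a × b) (a × b) ℂ) : (mSnd ω).trace = ω.trace := by
  simp [mSnd, Matrix.trace, Fintype.sum_prod_type_right]

lemma mFst_eq_sum_submatrix {a b : Type*} [Fintype b]
    (ω : Matrix (a × b) (a × b) ℂ) :
    mFst ω = ∑ k : b, ω.submatrix (fun i => (i, k)) (fun i => (i, k)) := by
  ext i j
  simp [mFst, Matrix.sum_apply]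

lemma mSnd_eq_sum_submatrix {a b : Type*} [Fintype a]
    (ω : Matrix (a × b) (a × b) ℂ) :
    mSnd ω = ∑ k : a, ω.submatrix (fun i => (k, i)) (fun i => (k, i)) := by
  ext i j
  simp [mSnd, Matrix.sum_apply]

lemma posSemidef_mFst {a b : Type*} [Fintype b]
    {ω : Matrix (a × b) (a × b) ℂ} (h : ω.PosSemidef) :
    (mFst ω).PosSemidef := by
  rw [mFst_eq_sum_submatrix]
  exact posSemidef_sum _ fun k _ => h.submatrix _

lemma posSemidef_mSnd {a b : Type*} [Fintype a]
    {ω : Matrix (a × b) (a × b) ℂ} (h : ω.PosSemidef) :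
    (mSnd ω).PosSemidef := by
  rw [mSnd_eq_sum_submatrix]
  exact posSemidef_sum _ fun k _ => h.submatrix _

variable {a b : Type*} [Fintype a] [Fintype b]

open scoped Kronecker

lemma mFst_kronecker_conj [DecidableEq b] (ω : Matrix (a × b) (a × b) ℂ) (U : Matrix a a ℂ)
    {V : Matrix b b ℂ} (hV : V * Vᴴ = 1) :
    mFst ((U ⊗ₖ V)ᴴ * ω * (U ⊗ₖ V)) = Uᴴ * mFst ω * U := by
  have hV' : ∀ q s, ∑ k, V s k * star (V q k) = if s = q then 1 else 0 := fun q s => by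
    simpa [mul_apply, one_apply] using congrFun (congrFun hV s) q
  ext i j
  simp only [mFst, of_apply, mul_apply, conjTranspose_apply, kroneckerMap_apply,
    Fintype.sum_prod_type, star_mul']
  calc ∑ k, ∑ r, ∑ s, (∑ p, ∑ q, star (U p i) * star (V q k) * ω (p, q) (r, s))
          * (U r j * V s k)
      = ∑ r, ∑ s, ∑ p, ∑ q, star (U p i) * ω (p, q) (r, s) * U r j
          * ∑ k, V s k * star (V q k) := by
        simp only [Finset.sum_mul, Finset.mul_sum]
        rw [Finset.sum_comm]
        refine Finset.sum_congr rfl fun r _ => ?_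
        rw [Finset.sum_comm]
        refine Finset.sum_congr rfl fun s _ => ?_
        rw [Finset.sum_comm]
        refine Finset.sum_congr rfl fun p _ => ?_
        rw [Finset.sum_comm]
        refine Finset.sum_congr rfl fun q _ => Finset.sum_congr rfl fun k _ => ?_
        ring
    _ = ∑ r, (∑ p, star (U p i) * ∑ k, ω (p, k) (r, k)) * U r j := by
        simp only [hV', mul_ite, mul_one, mul_zero, Finset.sum_ite_eq, Finset.mem_univ, if_true]
        refine Finset.sum_congr rfl fun r _ => ?_
        rw [Finset.sum_comm]
        simp only [Finset.sum_mul, Finset.mul_sum]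

lemma mSnd_kronecker_conj [DecidableEq a] (ω : Matrix (a × b) (a × b) ℂ) {U : Matrix a a ℂ}
    (V : Matrix b b ℂ) (hU : U * Uᴴ = 1) :
    mSnd ((U ⊗ₖ V)ᴴ * ω * (U ⊗ₖ V)) = Vᴴ * mSnd ω * V := by
  have e : ∀ σ : Matrix (a × b) (a × b) ℂ,
      mSnd σ = mFst (σ.submatrix (Equiv.prodComm b a) (Equiv.prodComm b a)) := fun σ => rfl
  rw [e, e, ← mFst_kronecker_conj _ V hU]
  congr 1
  rw [← submatrix_mul_equiv _ _ _ (Equiv.prodComm b a),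
    ← submatrix_mul_equiv _ _ _ (Equiv.prodComm b a)]
  have : (U ⊗ₖ V).submatrix (Equiv.prodComm b a) (Equiv.prodComm b a) = V ⊗ₖ U := by
    ext i j
    simp [mul_comm]
  rw [← conjTranspose_submatrix, this]

variable [DecidableEq a] [DecidableEq b]

/-- Subadditivity of the von Neumann entropy, in unnormalized form. -/
lemma specSum_negMulLog_le_marginals {ω : Matrix (a × b) (a × b) ℂ} (h : ω.PosSemidef) :
    specSum Real.negMulLog ω ≤ specSum Real.negMulLog (mFst ω) + specSum Real.negMulLog (mSnd ω)
      - Real.negMulLog ω.trace.re := by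
  have hA := posSemidef_mFst h
  have hB := posSemidef_mSnd h
  obtain ⟨U, hU1, hU2, hU3⟩ := hA.1.exists_unitary_diagonal
  obtain ⟨V, hV1, hV2, hV3⟩ := hB.1.exists_unitary_diagonal
  have hW : (U ⊗ₖ V) * (U ⊗ₖ V)ᴴ = 1 := by
    rw [conjTranspose_kronecker, ← mul_kronecker_mul, hU1, hV1, one_kronecker_one]
  set τ := (U ⊗ₖ V)ᴴ * ω * (U ⊗ₖ V) with hτ
  have h1 : ∀ i, ∑ k, (τ (i, k) (i, k)).re = hA.1.eigenvalues i := by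
    intro i
    have e := mFst_kronecker_conj ω U hV1
    rw [conj_eq_diagonal hU2 hU3] at e
    have := congrArg Complex.re (congrFun (congrFun e i) i)
    simpa [mFst] using this
  have h2 : ∀ k, ∑ i, (τ (i, k) (i, k)).re = hB.1.eigenvalues k := by
    intro k
    have e := mSnd_kronecker_conj ω V hU1
    rw [conj_eq_diagonal hV2 hV3] at e
    have := congrArg Complex.re (congrFun (congrFun e k) k)
    simpa [mSnd] using this
  have h3 : ∑ i, hA.1.eigenvalues i = ω.trace.re := by
    rw [← trace_mFst, hA.1.trace_eq_sum_eigenvalues, Complex.re_sum]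
    simp
  have key := sum_negMulLog_le_marginals (fun i k => (τ (i, k) (i, k)).re)
    fun i k => posSemidef_diag_re_nonneg (h.conjTranspose_mul_mul_same _) _
  simp only [h1, h2, h3] at key
  rw [specSum_eq_sum_eigenvalues _ hA.1, specSum_eq_sum_eigenvalues _ hB.1]
  refine le_trans ?_ key
  rw [← Fintype.sum_prod_type (f := fun x : a × b => Real.negMulLog (τ x x).re)]
  exact specSum_negMulLog_le_diag_conj h hW

lemma specSum_negMulLog_le_card {ρ : Matrix a a ℂ} (h : ρ.PosSemidef) :
    specSum Real.negMulLog ρ ≤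
      Real.negMulLog ρ.trace.re + ρ.trace.re * Real.log (Fintype.card a) := by
  rw [specSum_eq_sum_eigenvalues _ h.1, h.1.trace_eq_sum_eigenvalues, Complex.re_sum]
  exact sum_negMulLog_le_card _ h.eigenvalues_nonneg

/-- Discarding the factor `A` increases the entropy by at most `log dim H_A`. -/
lemma specSum_mSnd_le {ω : Matrix (a × b) (a × b) ℂ} (h : ω.PosSemidef) :
    specSum Real.negMulLog (mSnd ω) ≤
      specSum Real.negMulLog ω + ω.trace.re * Real.log (Fintype.card a) := by
  obtain ⟨Y, hY, hY'⟩ := exists_factor_diagonal h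
  set l := h.1.eigenvalues with hl
  set X : Matrix b ((a × b) × a) ℂ := of fun j x => Y (x.2, j) x.1 with hX
  have hS : mSnd ω = X * Xᴴ := by
    ext i j
    simp only [mSnd, of_apply, hY, mul_apply, conjTranspose_apply, hX]
    rw [Fintype.sum_prod_type_right]
  have hsum : ∀ k, ∑ i, ((Xᴴ * X) (k, i) (k, i)).re = l k := by
    intro k
    have := congrArg Complex.re (congrFun (congrFun hY' k) k)
    simpa [mul_apply, hX, Fintype.sum_prod_type] using this
  have htr : ∑ k, l k = ω.trace.re := by
    rw [h.1.trace_eq_sum_eigenvalues, Complex.re_sum]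
    simp [hl]
  rw [hS, specSum_eq_sum_eigenvalues _ h.1, ← htr, Finset.sum_mul, ← Finset.sum_add_distrib]
  refine (specSum_mul_conjTranspose_le X).trans ?_
  rw [Fintype.sum_prod_type]
  refine Finset.sum_le_sum fun k _ => ?_
  have := sum_negMulLog_le_card (fun i : a => ((Xᴴ * X) (k, i) (k, i)).re)
    fun i => posSemidef_diag_re_nonneg (posSemidef_conjTranspose_mul_self X) _
  rwa [hsum] at this

lemma mutInf_eq_specSum {ω : Matrix (a × b) (a × b) ℂ} (h : ω.PosSemidef) :
    mutInf ω = specSum Real.negMulLog (mFst ω) + specSum Real.negMulLog (mSnd ω)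
      - specSum Real.negMulLog ω - Real.negMulLog ω.trace.re := by
  rw [mutInf, vnEnt_eq_specSum h.1, vnEnt_eq_specSum (posSemidef_mFst h).1,
    vnEnt_eq_specSum (posSemidef_mSnd h).1, trace_mFst, trace_mSnd]
  ring

lemma mutInf_nonneg {ω : Matrix (a × b) (a × b) ℂ} (h : ω.PosSemidef) : 0 ≤ mutInf ω := by
  rw [mutInf_eq_specSum h]
  linarith [specSum_negMulLog_le_marginals h]

lemma mutInf_le {ω : Matrix (a × b) (a × b) ℂ} (h : ω.PosSemidef) :
    mutInf ω ≤ 2 * ω.trace.re * Real.log (Fintype.card a) := by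
  rw [mutInf_eq_specSum h]
  have h1 := specSum_mSnd_le h
  have h2 := specSum_negMulLog_le_card (posSemidef_mFst h)
  rw [trace_mFst] at h2
  linarith

/-- The mutual information is approximately additive on positive matrices. -/
lemma mutInf_add_bounds {ρ σ : Matrix (a × b) (a × b) ℂ} (hρ : ρ.PosSemidef)
    (hσ : σ.PosSemidef) (h1 : ρ.trace = 1) :
    mutInf ρ + mutInf σ
        - (1 + σ.trace.re) * Real.binEntropy (σ.trace.re / (1 + σ.trace.re)) ≤ mutInf (ρ + σ) ∧
      mutInf (ρ + σ) ≤ mutInf ρ + mutInf σ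
        + 2 * ((1 + σ.trace.re) * Real.binEntropy (σ.trace.re / (1 + σ.trace.re))) := by
  have hs : 0 ≤ σ.trace.re := (Complex.le_def.1 hσ.trace_nonneg).1
  rw [← negMulLog_one_add_eq hs, mutInf_eq_specSum hρ, mutInf_eq_specSum hσ,
    mutInf_eq_specSum (hρ.add hσ), mFst_add, mSnd_add, trace_add, Complex.add_re]
  have a1 := specSum_negMulLog_add_le hρ hσ
  have a2 := specSum_negMulLog_add_le (posSemidef_mFst hρ) (posSemidef_mFst hσ)
  have a3 := specSum_negMulLog_add_le (posSemidef_mSnd hρ) (posSemidef_mSnd hσ)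
  have b1 := specSum_negMulLog_add_ge hρ hσ
  have b2 := specSum_negMulLog_add_ge (posSemidef_mFst hρ) (posSemidef_mFst hσ)
  have b3 := specSum_negMulLog_add_ge (posSemidef_mSnd hρ) (posSemidef_mSnd hσ)
  simp only [trace_mFst, trace_mSnd, h1, Complex.one_re] at b1 b2 b3 ⊢
  constructor <;> linarith

end Bipartite

/-- Continuity bound for the quantum mutual information:
`|I(A:B)_{ω¹} − I(A:B)_{ω²}| ≤ 2ε log dim H_A + 3(1+ε)h₂(ε/(1+ε))` when `ε = ½‖ω¹−ω²‖₁ < 1`. -/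
theorem mutInf_continuity_bound {a b : Type*} [Fintype a] [DecidableEq a] [Fintype b]
    [DecidableEq b] (ω₁ ω₂ : Matrix (a × b) (a × b) ℂ) (h1 : IsState ω₁) (h2 : IsState ω₂)
    (hε : traceNorm (ω₁ - ω₂) / 2 < 1) :
    |mutInf ω₁ - mutInf ω₂|
      ≤ 2 * (traceNorm (ω₁ - ω₂) / 2) * Real.log (Fintype.card a)
        + 3 * (1 + traceNorm (ω₁ - ω₂) / 2) *
            Real.binEntropy ((traceNorm (ω₁ - ω₂) / 2) / (1 + traceNorm (ω₁ - ω₂) / 2)) := by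
  obtain ⟨P, N, hP, hN, hPN, htP, htN⟩ := exists_jordan_decomposition
    (h1.1.1.sub h2.1.1) (by rw [trace_sub, h1.2, h2.2, sub_self])
  have hΩ : ω₁ + N = ω₂ + P := by
    rw [sub_eq_sub_iff_add_eq_add] at hPN
    rw [hPN, add_comm]
  obtain ⟨l1, u1⟩ := mutInf_add_bounds h1.1 hN h1.2
  obtain ⟨l2, u2⟩ := mutInf_add_bounds h2.1 hP h2.2
  have n1 := mutInf_nonneg hN
  have n2 := mutInf_nonneg hP
  have m1 := mutInf_le hN
  have m2 := mutInf_le hP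
  rw [htN] at l1 u1 m1
  rw [htP] at l2 u2 m2
  rw [hΩ] at l1 u1
  rw [abs_le]
  constructor <;> linarith
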